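/- arXiv:1411.5308 — 2 statements merged into one kernel-verified Lean document; each statement's English description precedes it below -/
import Mathlib

section
/- Let Γ be a finite group and x ≥ 2. Then there exists a family of bijections Θ_y : ([x] × Γ × FS_Γ(y,x)) ⊔ ([x] × Γ × FS_Γ(y,x−1)) → FS_Γ(1+y,x), one for each integer y ≥ 1, such that for every morphism (g,e) : y′ → y of FS_Γ one has Θ_{y′}(m, γ, α∘(g,e)) = Θ_y(m, γ, α) ∘ (𝕀⊙(g,e)) for every m ∈ [x], γ ∈ Γ, α ∈ FS_Γ(y,x), and Θ_{y′}(m, γ, β∘(g,e)) = Θ_y(m, γ, β) ∘ (𝕀⊙(g,e)) for every m ∈ [x], γ ∈ Γ, β ∈ FS_Γ(y,x−1). -/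
/-- Morphisms of `FS_Γ` from `[y]` to `[x]`: pairs `(f, c)` with `f : [y] → [x]` a surjection
and `c : [y] → Γ` an arbitrary map.  We model `[n] = {1,…,n}` by `Fin n`, so the element
`1 ∈ [1+y]` corresponds to `0 : Fin (y+1)`. -/
structure FSGHom (Γ : Type) (y x : ℕ) where
  f : Fin y → Fin x
  surj : Function.Surjective f
  c : Fin y → Γ

/-- Composition in `FS_Γ`: the composite of `(f₂,c₂) : z → y` followed by `(f₁,c₁) : y → x`
is `(f₁∘f₂, r ↦ c₁(f₂ r) · c₂ r)`. -/
def FSGcomp {Γ : Type} [Group Γ] {z y x : ℕ} (α₁ : FSGHom Γ y x) (α₂ : FSGHom Γ z y) :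
    FSGHom Γ z x :=
  ⟨α₁.f ∘ α₂.f, α₁.surj.comp α₂.surj, fun r => α₁.c (α₂.f r) * α₂.c r⟩

theorem shiftSurj {y x : ℕ} {f : Fin y → Fin x} (hf : Function.Surjective f) :
    Function.Surjective (Fin.cases 0 (fun r => (f r).succ) : Fin (y + 1) → Fin (x + 1)) := by
  intro m
  induction m using Fin.cases with
  | zero => exact ⟨0, by simp⟩
  | succ t =>
    obtain ⟨r, hr⟩ := hf t
    exact ⟨r.succ, by simp [hr]⟩

/-- The shift `𝕀 ⊙ (f,c)` of a morphism of `FS_Γ`: `(f⁺, c⁺)` where `f⁺(1) = 1`,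
`f⁺(1+r) = 1+f(r)`, `c⁺(1) = 1` and `c⁺(1+r) = c(r)`. -/
def FSGshift {Γ : Type} [Group Γ] {y x : ℕ} (α : FSGHom Γ y x) : FSGHom Γ (y + 1) (x + 1) :=
  ⟨Fin.cases 0 (fun r => (α.f r).succ), shiftSurj α.surj, Fin.cons 1 α.c⟩

theorem FSGHom_ext {Γ : Type} {y x : ℕ} {a b : FSGHom Γ y x} (h1 : a.f = b.f) (h2 : a.c = b.c) :
    a = b := by
  cases a; cases b; cases h1; cases h2; rfl

def thetaL {Γ : Type} {y x : ℕ} (m : Fin x) (γ : Γ) (α : FSGHom Γ y x) : FSGHom Γ (y + 1) x :=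
  ⟨Fin.cons m α.f, fun t => by
    obtain ⟨r, hr⟩ := α.surj t
    exact ⟨r.succ, by simpa using hr⟩, Fin.cons γ α.c⟩

def thetaR {Γ : Type} {y x : ℕ} (m : Fin (x + 1)) (γ : Γ) (β : FSGHom Γ y x) :
    FSGHom Γ (y + 1) (x + 1) :=
  ⟨Fin.cons m (fun r => m.succAbove (β.f r)), fun t => by
    by_cases h : t = m
    · exact ⟨0, by simp [h]⟩
    · obtain ⟨s, hs⟩ := Fin.exists_succAbove_eq h
      obtain ⟨r, hr⟩ := β.surj s
      exact ⟨r.succ, by simp [hr, hs]⟩, Fin.cons γ β.c⟩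

def thetaFun (Γ : Type) (y x : ℕ) :
    (Fin (x + 1) × Γ × FSGHom Γ y (x + 1)) ⊕ (Fin (x + 1) × Γ × FSGHom Γ y x) →
      FSGHom Γ (y + 1) (x + 1)
  | Sum.inl p => thetaL p.1 p.2.1 p.2.2
  | Sum.inr p => thetaR p.1 p.2.1 p.2.2

theorem theta_ne {Γ : Type} {y x : ℕ} (m m' : Fin (x + 1)) (γ γ' : Γ)
    (α : FSGHom Γ y (x + 1)) (β : FSGHom Γ y x) : thetaL m γ α ≠ thetaR m' γ' β := by
  intro h
  have hf : (Fin.cons m α.f : Fin (y + 1) → Fin (x + 1)) =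
    Fin.cons m' (fun r => m'.succAbove (β.f r)) := congrArg FSGHom.f h
  obtain ⟨h1, h2⟩ := Fin.cons_inj.1 hf
  obtain ⟨r, hr⟩ := α.surj m'
  rw [h2] at hr
  exact Fin.succAbove_ne _ _ hr

theorem thetaFun_bij (Γ : Type) (y x : ℕ) : Function.Bijective (thetaFun Γ y x) := by
  constructor
  · rintro (⟨m, γ, α⟩ | ⟨m, γ, α⟩) (⟨m', γ', α'⟩ | ⟨m', γ', α'⟩) h
    · have hf : (Fin.cons m α.f : Fin (y + 1) → Fin (x + 1)) = Fin.cons m' α'.f :=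
        congrArg FSGHom.f h
      have hc : (Fin.cons γ α.c : Fin (y + 1) → Γ) = Fin.cons γ' α'.c := congrArg FSGHom.c h
      obtain ⟨h1, h2⟩ := Fin.cons_inj.1 hf
      obtain ⟨h3, h4⟩ := Fin.cons_inj.1 hc
      have h5 := FSGHom_ext h2 h4
      rw [h1, h3, h5]
    · exact (theta_ne _ _ _ _ _ _ h).elim
    · exact (theta_ne _ _ _ _ _ _ h.symm).elim
    · have hf : (Fin.cons m (fun r => m.succAbove (α.f r)) : Fin (y + 1) → Fin (x + 1)) = Fin.cons m' (fun r => m'.succAbove (α'.f r)) :=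
        congrArg FSGHom.f h
      have hc : (Fin.cons γ α.c : Fin (y + 1) → Γ) = Fin.cons γ' α'.c := congrArg FSGHom.c h
      obtain ⟨h1, h2⟩ := Fin.cons_inj.1 hf
      obtain ⟨h3, h4⟩ := Fin.cons_inj.1 hc
      subst h1
      have h5 : α = α' := FSGHom_ext
        (funext fun r => Fin.succAbove_right_injective (congrFun h2 r)) h4
      rw [h3, h5]
  · intro h
    by_cases hs : Function.Surjective (fun r : Fin y => h.f r.succ)
    · refine ⟨Sum.inl (h.f 0, h.c 0, ⟨fun r => h.f r.succ, hs, fun r => h.c r.succ⟩), ?_⟩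
      exact FSGHom_ext (Fin.cons_self_tail h.f) (Fin.cons_self_tail h.c)
    · have hm : ∀ r : Fin y, h.f r.succ ≠ h.f 0 := by
        intro r hr
        apply hs
        intro t
        obtain ⟨s, rfl⟩ := h.surj t
        induction s using Fin.cases with
        | zero => exact ⟨r, hr⟩
        | succ s => exact ⟨s, rfl⟩
      choose b hb using fun r => Fin.exists_succAbove_eq (hm r)
      have hbs : Function.Surjective b := by
        intro t
        obtain ⟨s, hs⟩ := h.surj ((h.f 0).succAbove t)
        induction s using Fin.cases with
        | zero => exact (Fin.succAbove_ne _ _ hs.symm).elim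
        | succ s => exact ⟨s, Fin.succAbove_right_injective ((hb s).trans hs)⟩
      refine ⟨Sum.inr (h.f 0, h.c 0, ⟨b, hbs, fun r => h.c r.succ⟩), ?_⟩
      refine FSGHom_ext ?_ (Fin.cons_self_tail h.c)
      change (Fin.cons (h.f 0) (fun r => (h.f 0).succAbove (b r)) : Fin (y + 1) → Fin (x + 1)) = h.f
      rw [funext hb]
      exact Fin.cons_self_tail h.f

/-- Let `Γ` be a finite group and `x ≥ 2` (the paper's `x` is our `x+2`,
so the paper's `[x]` is `Fin (x+2)` and the paper's `x−1` is our `x+1`).  There is a family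
of bijections `Θ_y : ([x] × Γ × FS_Γ(y,x)) ⊔ ([x] × Γ × FS_Γ(y,x−1)) → FS_Γ(1+y,x)` for
`y ≥ 1` (the paper's `y` is our `y+1`), natural with respect to precomposition: for every
`(g,e) : y′ → y` of `FS_Γ`, `Θ_{y′}(m, γ, α∘(g,e)) = Θ_y(m, γ, α) ∘ (𝕀⊙(g,e))` on both
summands. -/
theorem stmt10 (Γ : Type) [Group Γ] [Finite Γ] (x : ℕ) :
    ∃ Θ : ∀ y : ℕ,
        ((Fin (x + 2) × Γ × FSGHom Γ (y + 1) (x + 2)) ⊕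
          (Fin (x + 2) × Γ × FSGHom Γ (y + 1) (x + 1))) ≃ FSGHom Γ (y + 1 + 1) (x + 2),
      ∀ (y y' : ℕ) (g : FSGHom Γ (y' + 1) (y + 1)),
        (∀ (m : Fin (x + 2)) (γ : Γ) (α : FSGHom Γ (y + 1) (x + 2)),
          Θ y' (Sum.inl (m, γ, FSGcomp α g)) = FSGcomp (Θ y (Sum.inl (m, γ, α))) (FSGshift g)) ∧
        (∀ (m : Fin (x + 2)) (γ : Γ) (β : FSGHom Γ (y + 1) (x + 1)),
          Θ y' (Sum.inr (m, γ, FSGcomp β g)) =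
            FSGcomp (Θ y (Sum.inr (m, γ, β))) (FSGshift g)) := by
  refine ⟨fun y => Equiv.ofBijective _ (thetaFun_bij Γ (y + 1) (x + 1)), fun y y' g => ⟨?_, ?_⟩⟩
  · intro m γ α
    refine FSGHom_ext (funext fun r => ?_) (funext fun r => ?_) <;>
      induction r using Fin.cases <;>
      simp [thetaFun, thetaL, FSGcomp, FSGshift]
  · intro m γ β
    refine FSGHom_ext (funext fun r => ?_) (funext fun r => ?_) <;>
      induction r using Fin.cases <;>
      simp [thetaFun, thetaR, FSGcomp, FSGshift]
end

section
/- Let Γ be a finite group and x ≥ 2. Then there exists a family of bijections Θ_y : ([x] × Γ × OS_Γ(y,x)) ⊔ (Γ × OS_Γ(y,x−1)) → OS_Γ(1+y,x), one for each integer y ≥ 1, such that for every morphism (g,e) : y′ → y of OS_Γ one has Θ_{y′}(m, γ, α∘(g,e)) = Θ_y(m, γ, α) ∘ (𝕀⊙(g,e)) for every m ∈ [x], γ ∈ Γ, α ∈ OS_Γ(y,x), and Θ_{y′}(γ, β∘(g,e)) = Θ_y(γ, β) ∘ (𝕀⊙(g,e)) for every γ ∈ Γ, β ∈ OS_Γ(y,x−1).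 -/
/-- The fiber `f⁻¹(r)` of a surjection in `FS_Γ`, as a finset. -/
def FSGHom.fiber {Γ : Type} {y x : ℕ} (A : FSGHom Γ y x) (r : Fin x) : Finset (Fin y) :=
  Finset.univ.filter (fun i => A.f i = r)

theorem FSGHom.fiber_nonempty {Γ : Type} {y x : ℕ} (A : FSGHom Γ y x) (r : Fin x) :
    (A.fiber r).Nonempty := by
  obtain ⟨i, hi⟩ := A.surj r
  exact ⟨i, by simp [FSGHom.fiber, hi]⟩

/-- A morphism `(f,c)` of `FS_Γ` lies in `OS_Γ` when `f` is an *ordered surjection*: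
for all `r < s` in `[x]`, `min f⁻¹(r) < min f⁻¹(s)`. -/
def FSGHom.IsOrdered {Γ : Type} {y x : ℕ} (A : FSGHom Γ y x) : Prop :=
  ∀ r s : Fin x, r < s →
    (A.fiber r).min' (A.fiber_nonempty r) < (A.fiber s).min' (A.fiber_nonempty s)

/-- Morphisms of `OS_Γ`: morphisms of `FS_Γ` whose underlying surjection is ordered. -/
def OSGHom (Γ : Type) (y x : ℕ) : Type := { A : FSGHom Γ y x // A.IsOrdered }

theorem isOrdered_iff {Γ : Type} {y x : ℕ} (A : FSGHom Γ y x) :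
    A.IsOrdered ↔ ∀ r s : Fin x, r < s → ∀ j, A.f j = s → ∃ i, i < j ∧ A.f i = r := by
  constructor
  · intro h r s hrs j hj
    have h1 := h r s hrs
    have h2 := Finset.min'_mem _ (A.fiber_nonempty r)
    refine ⟨_, lt_of_lt_of_le h1 (Finset.min'_le _ j (by simp [FSGHom.fiber, hj])), ?_⟩
    simpa [FSGHom.fiber] using h2
  · intro h r s hrs
    have h2 := Finset.min'_mem _ (A.fiber_nonempty s)
    obtain ⟨i, hi, hir⟩ := h r s hrs ((A.fiber s).min' (A.fiber_nonempty s))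
      (by simpa [FSGHom.fiber] using h2)
    exact lt_of_le_of_lt (Finset.min'_le _ i (by simp [FSGHom.fiber, hir])) hi

theorem cyc_val {n : ℕ} (m r : Fin (n + 1)) :
    ((m.cycleRange r : Fin (n + 1)) : ℕ) =
      if (r : ℕ) < m then (r : ℕ) + 1 else if (r : ℕ) = m then 0 else r := by
  rcases lt_trichotomy r m with h | h | h
  · rw [Fin.coe_cycleRange_of_lt h, if_pos (by exact h)]
  · subst h; simp [Fin.cycleRange_self]
  · rw [Fin.cycleRange_of_gt h, if_neg, if_neg]
    · have : (m : ℕ) < r := h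
      omega
    · have : (m : ℕ) < r := h
      omega

def thL {Γ : Type} {y x : ℕ} (m : Fin (x + 1)) (γ : Γ) (A : FSGHom Γ y (x + 1)) :
    FSGHom Γ (y + 1) (x + 1) where
  f := Fin.cons 0 (fun r => m.cycleRange (A.f r))
  surj := by
    intro k
    obtain ⟨r, hr⟩ := A.surj (m.cycleRange.symm k)
    exact ⟨r.succ, by simp [hr]⟩
  c := Fin.cons γ A.c

def thR {Γ : Type} {y x : ℕ} (γ : Γ) (A : FSGHom Γ y x) :
    FSGHom Γ (y + 1) (x + 1) where
  f := Fin.cons 0 (fun r => (A.f r).succ)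
  surj := by
    intro k
    induction k using Fin.cases with
    | zero => exact ⟨0, by simp⟩
    | succ t =>
      obtain ⟨r, hr⟩ := A.surj t
      exact ⟨r.succ, by simp [hr]⟩
  c := Fin.cons γ A.c

theorem FSGHom.ext' {Γ : Type} {y x : ℕ} {A B : FSGHom Γ y x} (h1 : A.f = B.f)
    (h2 : A.c = B.c) : A = B := by
  cases A; cases B; simp_all

theorem thL_ord {Γ : Type} {y x : ℕ} (m : Fin (x + 1)) (γ : Γ) (A : FSGHom Γ y (x + 1))
    (hA : A.IsOrdered) : (thL m γ A).IsOrdered := by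
  rw [isOrdered_iff] at hA ⊢
  intro r s hrs j hj
  induction j using Fin.cases with
  | zero =>
    simp only [thL, Fin.cons_zero] at hj
    subst hj
    exact absurd hrs (by simp)
  | succ j =>
    simp only [thL, Fin.cons_succ] at hj
    by_cases hr : r = 0
    · exact ⟨0, by simp, by simp [thL, hr]⟩
    · obtain ⟨i, hi, hir⟩ := hA (m.cycleRange.symm r) (A.f j) (by
        have h1 := cyc_val m (m.cycleRange.symm r)
        have h2 := cyc_val m (A.f j)
        rw [Equiv.apply_symm_apply] at h1
        rw [hj] at h2
        have h3 : (r : ℕ) < s := hrs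
        have h4 : (r : ℕ) ≠ 0 := fun h => hr (Fin.ext h)
        rw [Fin.lt_def]
        split_ifs at h1 h2 <;> omega) j rfl
      exact ⟨i.succ, by simpa using hi, by simp [thL, hir]⟩

theorem thR_ord {Γ : Type} {y x : ℕ} (γ : Γ) (A : FSGHom Γ y x)
    (hA : A.IsOrdered) : (thR γ A).IsOrdered := by
  rw [isOrdered_iff] at hA ⊢
  intro r s hrs j hj
  induction j using Fin.cases with
  | zero =>
    simp only [thR, Fin.cons_zero] at hj
    subst hj
    exact absurd hrs (by simp)
  | succ j =>
    simp only [thR, Fin.cons_succ] at hj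
    induction r using Fin.cases with
    | zero => exact ⟨0, by simp, by simp [thR]⟩
    | succ r =>
      obtain ⟨i, hi, hir⟩ := hA r (A.f j) (by rw [← hj] at hrs; simpa using hrs) j rfl
      exact ⟨i.succ, by simpa using hi, by simp [thR, hir]⟩

theorem perm_eq_one {Γ : Type} {y x : ℕ} (A B : FSGHom Γ y x) (hA : A.IsOrdered)
    (hB : B.IsOrdered) (π : Equiv.Perm (Fin x)) (h : ∀ j, B.f j = π (A.f j)) : π = 1 := by
  rw [isOrdered_iff] at hA hB
  have hm : StrictMono π := by
    intro r s hrs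
    by_contra hc
    have hlt : π s < π r := lt_of_le_of_ne (not_lt.mp hc) (fun e => hrs.ne' (π.injective e))
    have key : ∀ j, A.f j ≠ s := by
      intro j
      induction j using WellFoundedLT.induction with
      | ind j ih =>
        intro hj
        obtain ⟨i, hi, hir⟩ := hA r s hrs j hj
        obtain ⟨k, hk, hks⟩ := hB (π s) (π r) hlt i (by rw [h, hir])
        rw [h] at hks
        exact ih k (hk.trans hi) (π.injective hks)
    obtain ⟨j, hj⟩ := A.surj s
    exact key j hj
  have := (StrictMono.range_inj hm strictMono_id).mp (by simp)
  ext k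
  simp [this]

theorem thL_inj {Γ : Type} {y x : ℕ} {m m' : Fin (x + 1)} {γ γ' : Γ}
    {A A' : FSGHom Γ y (x + 1)} (hA : A.IsOrdered) (hA' : A'.IsOrdered)
    (h : thL m γ A = thL m' γ' A') : m = m' ∧ γ = γ' ∧ A = A' := by
  have hf := congrArg FSGHom.f h
  have hc := congrArg FSGHom.c h
  simp only [thL] at hf hc
  obtain ⟨hγ, hc⟩ := Fin.cons_inj.mp hc
  obtain ⟨-, hf⟩ := Fin.cons_inj.mp hf
  have hπ := perm_eq_one A A' hA hA' (m.cycleRange.trans m'.cycleRange.symm) (fun j => by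
    have := congrFun hf j
    simp only [Equiv.trans_apply]
    rw [this, Equiv.symm_apply_apply])
  have hm : m = m' := by
    have h1 := congrArg (fun p : Equiv.Perm (Fin (x + 1)) => m'.cycleRange (p m)) hπ
    simp only [Equiv.trans_apply, Equiv.apply_symm_apply, Fin.cycleRange_self,
      Equiv.Perm.one_apply] at h1
    have h2 : m'.cycleRange m' = m'.cycleRange m := by rw [Fin.cycleRange_self, h1]
    exact (m'.cycleRange.injective h2).symm
  subst hm
  refine ⟨rfl, hγ, FSGHom.ext' ?_ hc⟩
  funext j
  exact m.cycleRange.injective (congrFun hf j)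

theorem thR_inj {Γ : Type} {y x : ℕ} {γ γ' : Γ} {A A' : FSGHom Γ y x}
    (h : thR γ A = thR γ' A') : γ = γ' ∧ A = A' := by
  have hf := congrArg FSGHom.f h
  have hc := congrArg FSGHom.c h
  simp only [thR] at hf hc
  obtain ⟨hγ, hc⟩ := Fin.cons_inj.mp hc
  obtain ⟨-, hf⟩ := Fin.cons_inj.mp hf
  refine ⟨hγ, FSGHom.ext' ?_ hc⟩
  funext j
  exact Fin.succ_injective _ (congrFun hf j)

theorem thL_ne_thR {Γ : Type} {y x : ℕ} {m : Fin (x + 1)} {γ γ' : Γ}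
    {A : FSGHom Γ y (x + 1)} {B : FSGHom Γ y x} (h : thL m γ A = thR γ' B) : False := by
  obtain ⟨j, hj⟩ := A.surj m
  have hf := congrFun (congrArg FSGHom.f h) j.succ
  simp only [thL, thR, Fin.cons_succ, hj, Fin.cycleRange_self] at hf
  exact Fin.succ_ne_zero _ hf.symm

theorem th_surj {Γ : Type} {y x : ℕ} (F : FSGHom Γ (y + 1) (x + 1)) (hF : F.IsOrdered) :
    (∃ m γ, ∃ A : FSGHom Γ y (x + 1), A.IsOrdered ∧ thL m γ A = F) ∨
    (∃ γ, ∃ B : FSGHom Γ y x, B.IsOrdered ∧ thR γ B = F) := by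
  rw [isOrdered_iff] at hF
  have F0 : F.f 0 = 0 := by
    by_contra hne
    obtain ⟨i, hi, -⟩ := hF 0 (F.f 0) (Fin.pos_of_ne_zero hne) 0 rfl
    exact absurd hi (by simp)
  have key : ∀ r s : Fin (x + 1), r ≠ 0 → r < s → ∀ j : Fin y, F.f j.succ = s →
      ∃ i : Fin y, i < j ∧ F.f i.succ = r := by
    intro r s hr hrs j hj
    obtain ⟨i, hi, hir⟩ := hF r s hrs j.succ hj
    induction i using Fin.cases with
    | zero => exact absurd (hir.symm.trans F0) hr
    | succ i => exact ⟨i, by simpa using hi, hir⟩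
  have hit : ∀ k : Fin (x + 1), k ≠ 0 → ∃ i : Fin y, F.f i.succ = k := by
    intro k hk
    obtain ⟨i, hi⟩ := F.surj k
    induction i using Fin.cases with
    | zero => exact absurd (hi.symm.trans F0) hk
    | succ i => exact ⟨i, hi⟩
  by_cases hz : ∃ j : Fin y, F.f j.succ = 0
  · left
    obtain ⟨j0, hj0, hmin⟩ : ∃ j0 : Fin y, F.f j0.succ = 0 ∧
        ∀ j : Fin y, F.f j.succ = 0 → j0 ≤ j := by
      obtain ⟨a, ha, hb⟩ := WellFounded.has_min (wellFounded_lt (α := Fin y))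
        {j | F.f j.succ = 0} hz
      exact ⟨a, ha, fun j hj => not_lt.mp (hb j hj)⟩
    obtain ⟨i0, hi0, hmax⟩ := Finset.exists_max_image (Finset.Iic j0) (fun i => F.f i.succ)
      ⟨j0, by simp⟩
    rw [Finset.mem_Iic] at hi0
    have hmax' : ∀ i, i ≤ j0 → F.f i.succ ≤ F.f i0.succ := fun i hi => hmax i (by simpa using hi)
    generalize hm : F.f i0.succ = m at hmax'
    refine ⟨m, F.c 0, ⟨fun j => m.cycleRange.symm (F.f j.succ), ?_, fun j => F.c j.succ⟩, ?_, ?_⟩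
    · intro k
      by_cases hk : m.cycleRange k = 0
      · exact ⟨j0, by simp only [hj0, ← hk, Equiv.symm_apply_apply]⟩
      · obtain ⟨i, hi⟩ := hit _ hk
        exact ⟨i, by simp only [hi, Equiv.symm_apply_apply]⟩
    · rw [isOrdered_iff]
      intro r s hrs j hj
      simp only at hj ⊢
      rw [Equiv.symm_apply_eq] at hj
      simp only [Equiv.symm_apply_eq]
      have hr := cyc_val m r
      have hs := cyc_val m s
      have hrs' : (r : ℕ) < s := hrs
      by_cases hr0 : m.cycleRange r = 0
      · refine ⟨j0, ?_, hj0.trans hr0.symm⟩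
        by_contra hc
        have h1 : (F.f j.succ : ℕ) ≤ m := hmax' j (not_lt.mp hc)
        rw [hj] at h1
        have h2 : (m.cycleRange r : ℕ) = 0 := by rw [hr0]; rfl
        split_ifs at hr hs <;> omega
      · by_cases hs0 : m.cycleRange s = 0
        · have hjj := hmin j (hj.trans hs0)
          have h2 : (m.cycleRange s : ℕ) = 0 := by rw [hs0]; rfl
          have hle : m.cycleRange r ≤ m := by
            rw [Fin.le_def]
            split_ifs at hr hs <;> omega
          have hne : i0 ≠ j0 := by
            rintro rfl
            rw [hj0] at hm
            subst hm
            exact hr0 (Fin.le_zero_iff.mp hle)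
          have hlt : i0 < j := lt_of_lt_of_le (lt_of_le_of_ne hi0 hne) hjj
          rcases hle.eq_or_lt with he | hl
          · exact ⟨i0, hlt, hm.trans he.symm⟩
          · obtain ⟨i, hi, hir⟩ := key _ m hr0 hl i0 hm
            exact ⟨i, hi.trans hlt, hir⟩
        · refine key _ _ hr0 ?_ j hj
          have h2 : (m.cycleRange s : ℕ) ≠ 0 := fun h => hs0 (Fin.ext h)
          rw [Fin.lt_def]
          split_ifs at hr hs <;> omega
    · refine FSGHom.ext' ?_ ?_
      · funext j
        induction j using Fin.cases with
        | zero => simp [thL, F0]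
        | succ j => simp [thL]
      · funext j
        induction j using Fin.cases with
        | zero => simp [thL]
        | succ j => simp [thL]
  · right
    have hz' : ∀ j : Fin y, F.f j.succ ≠ 0 := fun j hj => hz ⟨j, hj⟩
    refine ⟨F.c 0, ⟨fun j => (F.f j.succ).pred (hz' j), ?_, fun j => F.c j.succ⟩, ?_, ?_⟩
    · intro k
      obtain ⟨i, hi⟩ := hit k.succ (Fin.succ_ne_zero k)
      exact ⟨i, by simp [hi]⟩
    · rw [isOrdered_iff]
      intro r s hrs j hj
      simp only [Fin.pred_eq_iff_eq_succ] at hj ⊢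
      exact key r.succ s.succ (Fin.succ_ne_zero r) (by simpa using hrs) j hj
    · refine FSGHom.ext' ?_ ?_
      · funext j
        induction j using Fin.cases with
        | zero => simp [thR, F0]
        | succ j => simp [thR]
      · funext j
        induction j using Fin.cases with
        | zero => simp [thR]
        | succ j => simp [thR]

def thFun (Γ : Type) (x y : ℕ) :
    ((Fin (x + 2) × Γ × OSGHom Γ (y + 1) (x + 2)) ⊕
      (Γ × OSGHom Γ (y + 1) (x + 1))) → OSGHom Γ (y + 1 + 1) (x + 2)
  | Sum.inl (m, γ, A) => ⟨thL m γ A.1, thL_ord m γ A.1 A.2⟩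
  | Sum.inr (γ, B) => ⟨thR γ B.1, thR_ord γ B.1 B.2⟩

theorem thFun_bij (Γ : Type) (x y : ℕ) : Function.Bijective (thFun Γ x y) := by
  constructor
  · rintro (⟨m, γ, A⟩ | ⟨γ, B⟩) (⟨m', γ', A'⟩ | ⟨γ', B'⟩) h
    · obtain ⟨rfl, rfl, hA⟩ := thL_inj A.2 A'.2 (congrArg Subtype.val h)
      rw [Subtype.ext hA]
    · exact (thL_ne_thR (congrArg Subtype.val h)).elim
    · exact (thL_ne_thR (congrArg Subtype.val h).symm).elim
    · obtain ⟨rfl, hB⟩ := thR_inj (congrArg Subtype.val h)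
      rw [Subtype.ext hB]
  · rintro ⟨F, hF⟩
    rcases th_surj F hF with ⟨m, γ, A, hA, h⟩ | ⟨γ, B, hB, h⟩
    · exact ⟨Sum.inl (m, γ, ⟨A, hA⟩), Subtype.ext h⟩
    · exact ⟨Sum.inr (γ, ⟨B, hB⟩), Subtype.ext h⟩

/-- Let `Γ` be a finite group and `x ≥ 2` (the paper's `x` is our `x+2`,
so the paper's `[x]` is `Fin (x+2)` and the paper's `x−1` is our `x+1`).  There is a family
of bijections `Θ_y : ([x] × Γ × OS_Γ(y,x)) ⊔ (Γ × OS_Γ(y,x−1)) → OS_Γ(1+y,x)` for `y ≥ 1`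
(the paper's `y` is our `y+1`), natural with respect to precomposition: for every
`(g,e) : y′ → y` of `OS_Γ`, `Θ_{y′}(m, γ, α∘(g,e)) = Θ_y(m, γ, α) ∘ (𝕀⊙(g,e))` and
`Θ_{y′}(γ, β∘(g,e)) = Θ_y(γ, β) ∘ (𝕀⊙(g,e))`.  (Composites of morphisms of `OS_Γ` are
morphisms of `OS_Γ`; here the proof `h` that the composite is ordered is taken as a
hypothesis, and the equations are stated between the underlying `FS_Γ`-morphisms.) -/
theorem stmt12 (Γ : Type) [Group Γ] [Finite Γ] (x : ℕ) :
    ∃ Θ : ∀ y : ℕ,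
        ((Fin (x + 2) × Γ × OSGHom Γ (y + 1) (x + 2)) ⊕
          (Γ × OSGHom Γ (y + 1) (x + 1))) ≃ OSGHom Γ (y + 1 + 1) (x + 2),
      ∀ (y y' : ℕ) (g : OSGHom Γ (y' + 1) (y + 1)),
        (∀ (m : Fin (x + 2)) (γ : Γ) (A : OSGHom Γ (y + 1) (x + 2))
          (h : (FSGcomp A.1 g.1).IsOrdered),
          (Θ y' (Sum.inl (m, γ, ⟨FSGcomp A.1 g.1, h⟩))).1 =
            FSGcomp (Θ y (Sum.inl (m, γ, A))).1 (FSGshift g.1)) ∧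
        (∀ (γ : Γ) (B : OSGHom Γ (y + 1) (x + 1)) (h : (FSGcomp B.1 g.1).IsOrdered),
          (Θ y' (Sum.inr (γ, ⟨FSGcomp B.1 g.1, h⟩))).1 =
            FSGcomp (Θ y (Sum.inr (γ, B))).1 (FSGshift g.1)) := by
  refine ⟨fun y => Equiv.ofBijective _ (thFun_bij Γ x y), fun y y' g => ⟨?_, ?_⟩⟩
  · intro m γ A h
    change thL m γ (FSGcomp A.1 g.1) = FSGcomp (thL m γ A.1) (FSGshift g.1)
    refine FSGHom.ext' ?_ ?_ <;> funext j <;> induction j using Fin.cases <;>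
      simp [thL, FSGcomp, FSGshift]
  · intro γ B h
    change thR γ (FSGcomp B.1 g.1) = FSGcomp (thR γ B.1) (FSGshift g.1)
    refine FSGHom.ext' ?_ ?_ <;> funext j <;> induction j using Fin.cases <;>
      simp [thR, FSGcomp, FSGshift]
end
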